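/- For every R ≥ R₀ one has the energy identity d𝓔/dR(R) = −(2/R) ∫₀^{2π} [ (∂_R U)²(R,θ) + (e^{4U(R,θ)}/(4R²)) (∂_θ A)²(R,θ) ] dθ; in particular, the energy 𝓔 is non-increasing on [R₀,∞). -/

import Mathlib

open Real MeasureTheory Set

/-- Partial derivative with respect to the first (time) variable `R`. -/
noncomputable def pdR (f : ℝ → ℝ → ℝ) (R θ : ℝ) : ℝ := deriv (fun r => f r θ) R

/-- Partial derivative with respect to the second (space) variable `θ`. -/
noncomputable def pdT (f : ℝ → ℝ → ℝ) (R θ : ℝ) : ℝ := deriv (fun t => f R t) θ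

/-
The energy density `e` satisfies the local balance law `∂_R e = ∂_θ F - (2 / R) d`, in which the
second-order terms of the two wave equations combine into the `θ`-derivative of the energy flux `F`
and the cross terms in `∂U ∂A ∂A` cancel. Integrated over one period, the flux disappears and
`-(2 / R) ∫ d ≤ 0` remains.
-/

open scoped Topology

section PartialDerivatives

variable {f : ℝ → ℝ → ℝ} {R θ : ℝ}

theorem hasDerivAt_fderiv_fst (hf : DifferentiableAt ℝ (Function.uncurry f) (R, θ)) :
    HasDerivAt (fun r ↦ f r θ) (fderiv ℝ (Function.uncurry f) (R, θ) (1, 0)) R :=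
  hf.hasFDerivAt.comp_hasDerivAt (f := fun r ↦ (r, θ)) R
    ((hasDerivAt_id R).prodMk (hasDerivAt_const R θ))

theorem hasDerivAt_fderiv_snd (hf : DifferentiableAt ℝ (Function.uncurry f) (R, θ)) :
    HasDerivAt (fun t ↦ f R t) (fderiv ℝ (Function.uncurry f) (R, θ) (0, 1)) θ :=
  hf.hasFDerivAt.comp_hasDerivAt (f := fun t ↦ (R, t)) θ
    ((hasDerivAt_const θ R).prodMk (hasDerivAt_id θ))

theorem hasDerivAt_pdR (hf : DifferentiableAt ℝ (Function.uncurry f) (R, θ)) :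
    HasDerivAt (fun r ↦ f r θ) (pdR f R θ) R :=
  (hasDerivAt_fderiv_fst hf).differentiableAt.hasDerivAt

theorem hasDerivAt_pdT (hf : DifferentiableAt ℝ (Function.uncurry f) (R, θ)) :
    HasDerivAt (fun t ↦ f R t) (pdT f R θ) θ :=
  (hasDerivAt_fderiv_snd hf).differentiableAt.hasDerivAt

theorem uncurry_pdR_eventuallyEq (hf : ContDiffAt ℝ 1 (Function.uncurry f) (R, θ)) :
    Function.uncurry (pdR f) =ᶠ[𝓝 (R, θ)] fun p ↦ fderiv ℝ (Function.uncurry f) p (1, 0) := by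
  filter_upwards [hf.eventually (by simp)] with p hp
  exact (hasDerivAt_fderiv_fst (hp.differentiableAt one_ne_zero)).deriv

theorem uncurry_pdT_eventuallyEq (hf : ContDiffAt ℝ 1 (Function.uncurry f) (R, θ)) :
    Function.uncurry (pdT f) =ᶠ[𝓝 (R, θ)] fun p ↦ fderiv ℝ (Function.uncurry f) p (0, 1) := by
  filter_upwards [hf.eventually (by simp)] with p hp
  exact (hasDerivAt_fderiv_snd (hp.differentiableAt one_ne_zero)).deriv

theorem contDiffAt_pdR {m n : WithTop ℕ∞} (hf : ContDiffAt ℝ n (Function.uncurry f) (R, θ))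
    (hmn : m + 1 ≤ n) : ContDiffAt ℝ m (Function.uncurry (pdR f)) (R, θ) :=
  ((hf.fderiv_right hmn).clm_apply contDiffAt_const).congr_of_eventuallyEq
    (uncurry_pdR_eventuallyEq (hf.of_le (le_add_self.trans hmn)))

theorem contDiffAt_pdT {m n : WithTop ℕ∞} (hf : ContDiffAt ℝ n (Function.uncurry f) (R, θ))
    (hmn : m + 1 ≤ n) : ContDiffAt ℝ m (Function.uncurry (pdT f)) (R, θ) :=
  ((hf.fderiv_right hmn).clm_apply contDiffAt_const).congr_of_eventuallyEq
    (uncurry_pdT_eventuallyEq (hf.of_le (le_add_self.trans hmn)))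

theorem continuousAt_pdR (hf : ContDiffAt ℝ 1 (Function.uncurry f) (R, θ)) :
    ContinuousAt (Function.uncurry (pdR f)) (R, θ) :=
  (contDiffAt_pdR (m := 0) hf (by simp)).continuousAt

theorem continuousAt_pdT (hf : ContDiffAt ℝ 1 (Function.uncurry f) (R, θ)) :
    ContinuousAt (Function.uncurry (pdT f)) (R, θ) :=
  (contDiffAt_pdT (m := 0) hf (by simp)).continuousAt

theorem differentiableAt_pdR (hf : ContDiffAt ℝ 2 (Function.uncurry f) (R, θ)) :
    DifferentiableAt ℝ (Function.uncurry (pdR f)) (R, θ) :=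
  (contDiffAt_pdR hf one_add_one_eq_two.le).differentiableAt one_ne_zero

theorem differentiableAt_pdT (hf : ContDiffAt ℝ 2 (Function.uncurry f) (R, θ)) :
    DifferentiableAt ℝ (Function.uncurry (pdT f)) (R, θ) :=
  (contDiffAt_pdT hf one_add_one_eq_two.le).differentiableAt one_ne_zero

theorem pdR_pdT_comm (hf : ContDiffAt ℝ 2 (Function.uncurry f) (R, θ)) :
    pdR (pdT f) R θ = pdT (pdR f) R θ := by
  have hf₁ : ContDiffAt ℝ 1 (Function.uncurry f) (R, θ) := hf.of_le one_le_two
  have hf' : DifferentiableAt ℝ (fderiv ℝ (Function.uncurry f)) (R, θ) :=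
    (hf.fderiv_right (m := 1) one_add_one_eq_two.le).differentiableAt one_ne_zero
  have fderiv_apply (v w : ℝ × ℝ) :
      fderiv ℝ (fun p ↦ fderiv ℝ (Function.uncurry f) p v) (R, θ) w =
        fderiv ℝ (fderiv ℝ (Function.uncurry f)) (R, θ) w v := by
    simp [fderiv_clm_apply hf' (differentiableAt_const v)]
  calc pdR (pdT f) R θ
      = fderiv ℝ (fderiv ℝ (Function.uncurry f)) (R, θ) (1, 0) (0, 1) := by
        rw [← fderiv_apply, ← (uncurry_pdT_eventuallyEq hf₁).fderiv_eq]
        exact (hasDerivAt_fderiv_fst (differentiableAt_pdT hf)).deriv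
    _ = fderiv ℝ (fderiv ℝ (Function.uncurry f)) (R, θ) (0, 1) (1, 0) :=
        hf.isSymmSndFDerivAt (by simp) _ _
    _ = pdT (pdR f) R θ := by
        rw [← fderiv_apply, ← (uncurry_pdR_eventuallyEq hf₁).fderiv_eq]
        exact (hasDerivAt_fderiv_snd (differentiableAt_pdR hf)).deriv.symm

theorem periodic_pdR {T : ℝ} (hf : ∀ r, Function.Periodic (f r) T) (R : ℝ) :
    Function.Periodic (pdR f R) T := fun θ ↦ by
  simp only [pdR, hf _ θ]

theorem periodic_pdT {T : ℝ} (hf : Function.Periodic (f R) T) :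
    Function.Periodic (pdT f R) T := fun θ ↦ by
  simp only [pdT, ← deriv_comp_add_const, hf _]

end PartialDerivatives

section ParametricIntegrals

variable {a b R : ℝ}

theorem continuousOn_of_continuousAt_uncurry {f : ℝ → ℝ → ℝ} {s : Set ℝ}
    (hf : ∀ θ ∈ s, ContinuousAt (Function.uncurry f) (R, θ)) : ContinuousOn (f R) s :=
  fun θ hθ ↦ ((hf θ hθ).comp (f := fun t ↦ (R, t)) (by fun_prop)).continuousWithinAt

theorem hasDerivAt_intervalIntegral_pdR {f : ℝ → ℝ → ℝ}
    (hf : ∀ θ ∈ uIcc a b, ContDiffAt ℝ 1 (Function.uncurry f) (R, θ)) :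
    HasDerivAt (fun r ↦ ∫ θ in a..b, f r θ) (∫ θ in a..b, pdR f R θ) R := by
  have hf_near : ∀ᶠ r in 𝓝 R, ∀ θ ∈ uIcc a b, ContDiffAt ℝ 1 (Function.uncurry f) (r, θ) :=
    isCompact_uIcc.eventually_forall_of_forall_eventually
      fun θ hθ ↦ (hf θ hθ).eventually (by simp)
  obtain ⟨ε, hε, hf_ball⟩ := Metric.nhds_basis_closedBall.eventually_iff.mp hf_near
  obtain ⟨C, hC⟩ := ((isCompact_closedBall R ε).prod
    (isCompact_uIcc (a := a) (b := b))).exists_bound_of_continuousOn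
      (f := Function.uncurry (pdR f))
      fun p hp ↦ (continuousAt_pdR (hf_ball hp.1 p.2 hp.2)).continuousWithinAt
  have integrable {r : ℝ} (hr : ∀ θ ∈ uIcc a b, ContDiffAt ℝ 1 (Function.uncurry f) (r, θ)) :
      IntervalIntegrable (f r) volume a b :=
    (continuousOn_of_continuousAt_uncurry fun θ hθ ↦ (hr θ hθ).continuousAt).intervalIntegrable
  have integrable_pdR : IntervalIntegrable (pdR f R) volume a b :=
    (continuousOn_of_continuousAt_uncurry
      fun θ hθ ↦ continuousAt_pdR (hf θ hθ)).intervalIntegrable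
  refine (intervalIntegral.hasDerivAt_integral_of_dominated_loc_of_deriv_le
    (bound := fun _ ↦ C) (Metric.closedBall_mem_nhds R hε)
    (hf_near.mono fun r hr ↦ (integrable hr).aestronglyMeasurable_restrict_uIoc)
    (integrable hf) integrable_pdR.aestronglyMeasurable_restrict_uIoc ?_
    intervalIntegrable_const ?_).2
  · exact .of_forall fun θ hθ r hr ↦ hC (r, θ) ⟨hr, uIoc_subset_uIcc hθ⟩
  · exact .of_forall fun θ hθ r hr ↦
      hasDerivAt_pdR ((hf_ball hr θ (uIoc_subset_uIcc hθ)).differentiableAt one_ne_zero)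

theorem intervalIntegral_pdT {f : ℝ → ℝ → ℝ}
    (hf : ∀ θ ∈ uIcc a b, ContDiffAt ℝ 1 (Function.uncurry f) (R, θ)) :
    ∫ θ in a..b, pdT f R θ = f R b - f R a :=
  intervalIntegral.integral_eq_sub_of_hasDerivAt
    (fun θ hθ ↦ hasDerivAt_pdT ((hf θ hθ).differentiableAt one_ne_zero))
    (continuousOn_of_continuousAt_uncurry
      fun θ hθ ↦ continuousAt_pdT (hf θ hθ)).intervalIntegrable

theorem hasDerivAt_intervalIntegral_of_balanceLaw {e F : ℝ → ℝ → ℝ} {g : ℝ → ℝ}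
    (he : ∀ θ ∈ uIcc a b, ContDiffAt ℝ 1 (Function.uncurry e) (R, θ))
    (hF : ∀ θ ∈ uIcc a b, ContDiffAt ℝ 1 (Function.uncurry F) (R, θ)) (hFab : F R b = F R a)
    (balance : ∀ θ ∈ uIcc a b, pdR e R θ = pdT F R θ + g θ) :
    HasDerivAt (fun r ↦ ∫ θ in a..b, e r θ) (∫ θ in a..b, g θ) R := by
  have integrable_pdR : IntervalIntegrable (pdR e R) volume a b :=
    (continuousOn_of_continuousAt_uncurry
      fun θ hθ ↦ continuousAt_pdR (he θ hθ)).intervalIntegrable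
  have integrable_pdT : IntervalIntegrable (pdT F R) volume a b :=
    (continuousOn_of_continuousAt_uncurry
      fun θ hθ ↦ continuousAt_pdT (hF θ hθ)).intervalIntegrable
  refine (hasDerivAt_intervalIntegral_pdR he).congr_deriv (Eq.symm ?_)
  calc ∫ θ in a..b, g θ
      = ∫ θ in a..b, (pdR e R θ - pdT F R θ) :=
        intervalIntegral.integral_congr fun θ hθ ↦ eq_sub_of_add_eq' (balance θ hθ).symm
    _ = (∫ θ in a..b, pdR e R θ) - (F R b - F R a) := by
        rw [intervalIntegral.integral_sub integrable_pdR integrable_pdT, intervalIntegral_pdT hF]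
    _ = ∫ θ in a..b, pdR e R θ := by rw [hFab, sub_self, sub_zero]

end ParametricIntegrals

section Gowdy

/-- `U` and `A` are of class `C²` near `(R, θ)` and satisfy the Gowdy wave equations at that point.
The condition is imposed pointwise so that it makes sense over an arbitrary set of times. -/
structure IsGowdySolutionAt (U A : ℝ → ℝ → ℝ) (R θ : ℝ) : Prop where
  contDiffAt_U : ContDiffAt ℝ 2 (Function.uncurry U) (R, θ)
  contDiffAt_A : ContDiffAt ℝ 2 (Function.uncurry A) (R, θ)
  wave_U : deriv (fun r ↦ r * pdR U r θ) R - deriv (fun t ↦ R * pdT U R t) θ =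
    exp (4 * U R θ) / (2 * R) * ((pdR A R θ) ^ 2 - (pdT A R θ) ^ 2)
  wave_A : deriv (fun r ↦ r⁻¹ * pdR A r θ) R - deriv (fun t ↦ R⁻¹ * pdT A R t) θ =
    4 / R * (-(pdR U R θ * pdR A R θ) + pdT U R θ * pdT A R θ)

/-- The integrand of the Gowdy energy `𝓔`. -/
noncomputable def gowdyEnergyDensity (U A : ℝ → ℝ → ℝ) (R θ : ℝ) : ℝ :=
  (pdR U R θ) ^ 2 + (pdT U R θ) ^ 2 +
    exp (4 * U R θ) / (4 * R ^ 2) * ((pdR A R θ) ^ 2 + (pdT A R θ) ^ 2)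

/-- The Gowdy energy flux: its `θ`-derivative is the conservative part of the evolution of
`gowdyEnergyDensity`. -/
noncomputable def gowdyEnergyFlux (U A : ℝ → ℝ → ℝ) (R θ : ℝ) : ℝ :=
  2 * (pdR U R θ * pdT U R θ) + exp (4 * U R θ) / (2 * R ^ 2) * (pdR A R θ * pdT A R θ)

/-- The part of the energy density dissipated, at rate `2 / R`, by the expansion. -/
noncomputable def gowdyDissipation (U A : ℝ → ℝ → ℝ) (R θ : ℝ) : ℝ :=
  (pdR U R θ) ^ 2 + exp (4 * U R θ) / (4 * R ^ 2) * (pdT A R θ) ^ 2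

/-- The Gowdy energy `𝓔(R)` over the period `[0, T]`. -/
noncomputable def gowdyEnergy (U A : ℝ → ℝ → ℝ) (T R : ℝ) : ℝ :=
  ∫ θ in 0..T, gowdyEnergyDensity U A R θ

variable {U A : ℝ → ℝ → ℝ} {R θ T : ℝ}

theorem contDiffAt_exp_div {n : WithTop ℕ∞} {c : ℝ}
    (hU : ContDiffAt ℝ n (Function.uncurry U) (R, θ)) (hc : c ≠ 0) (hR : R ≠ 0) :
    ContDiffAt ℝ n (fun p ↦ exp (4 * Function.uncurry U p) / (c * p.1 ^ 2)) (R, θ) :=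
  (contDiffAt_const.mul hU).exp.div (contDiffAt_const.mul (contDiffAt_fst.pow 2))
    (mul_ne_zero hc (pow_ne_zero 2 hR))

theorem contDiffAt_gowdyEnergyDensity {m n : WithTop ℕ∞}
    (hU : ContDiffAt ℝ n (Function.uncurry U) (R, θ))
    (hA : ContDiffAt ℝ n (Function.uncurry A) (R, θ)) (hmn : m + 1 ≤ n) (hR : R ≠ 0) :
    ContDiffAt ℝ m (Function.uncurry (gowdyEnergyDensity U A)) (R, θ) := by
  have hweight := contDiffAt_exp_div (hU.of_le (le_self_add.trans hmn)) four_ne_zero hR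
  exact (((contDiffAt_pdR hU hmn).pow 2).add ((contDiffAt_pdT hU hmn).pow 2)).add
    (hweight.mul (((contDiffAt_pdR hA hmn).pow 2).add ((contDiffAt_pdT hA hmn).pow 2)))

theorem contDiffAt_gowdyEnergyFlux {m n : WithTop ℕ∞}
    (hU : ContDiffAt ℝ n (Function.uncurry U) (R, θ))
    (hA : ContDiffAt ℝ n (Function.uncurry A) (R, θ)) (hmn : m + 1 ≤ n) (hR : R ≠ 0) :
    ContDiffAt ℝ m (Function.uncurry (gowdyEnergyFlux U A)) (R, θ) := by
  have hweight := contDiffAt_exp_div (hU.of_le (le_self_add.trans hmn)) two_ne_zero hR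
  exact (contDiffAt_const.mul ((contDiffAt_pdR hU hmn).mul (contDiffAt_pdT hU hmn))).add
    (hweight.mul ((contDiffAt_pdR hA hmn).mul (contDiffAt_pdT hA hmn)))

theorem periodic_gowdyEnergyFlux (hU : ∀ r, Function.Periodic (U r) T)
    (hA : ∀ r, Function.Periodic (A r) T) (R : ℝ) :
    Function.Periodic (gowdyEnergyFlux U A R) T := fun θ ↦ by
  simp only [gowdyEnergyFlux, hU R θ, periodic_pdR hU R θ, periodic_pdR hA R θ,
    periodic_pdT (hU R) θ, periodic_pdT (hA R) θ]

theorem pdR_gowdyEnergyDensity (hU : ContDiffAt ℝ 2 (Function.uncurry U) (R, θ))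
    (hA : ContDiffAt ℝ 2 (Function.uncurry A) (R, θ)) (hR : R ≠ 0) :
    pdR (gowdyEnergyDensity U A) R θ =
      2 * (pdR U R θ * pdR (pdR U) R θ + pdT U R θ * pdT (pdR U) R θ) +
      exp (4 * U R θ) / (2 * R ^ 2) *
        ((2 * pdR U R θ - 1 / R) * ((pdR A R θ) ^ 2 + (pdT A R θ) ^ 2) +
          pdR A R θ * pdR (pdR A) R θ + pdT A R θ * pdT (pdR A) R θ) := by
  have dU := hasDerivAt_pdR (hU.differentiableAt two_ne_zero)
  have dU_R := hasDerivAt_pdR (differentiableAt_pdR hU)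
  have dU_T := hasDerivAt_pdR (differentiableAt_pdT hU)
  have dA_R := hasDerivAt_pdR (differentiableAt_pdR hA)
  have dA_T := hasDerivAt_pdR (differentiableAt_pdT hA)
  have dweight : HasDerivAt (fun r ↦ exp (4 * U r θ) / (4 * r ^ 2))
      (exp (4 * U R θ) / (2 * R ^ 2) * (2 * pdR U R θ - 1 / R)) R := by
    refine ((dU.const_mul 4).exp.div ((hasDerivAt_pow 2 R).const_mul 4)
      (by simpa using hR)).congr_deriv ?_
    field_simp
    ring
  refine (((dU_R.pow 2).add (dU_T.pow 2)).add
    (dweight.mul ((dA_R.pow 2).add (dA_T.pow 2)))).deriv.trans ?_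
  rw [pdR_pdT_comm hU, pdR_pdT_comm hA]
  simp only [Pi.add_apply, Pi.pow_apply]
  ring

theorem pdT_gowdyEnergyFlux (hU : ContDiffAt ℝ 2 (Function.uncurry U) (R, θ))
    (hA : ContDiffAt ℝ 2 (Function.uncurry A) (R, θ)) :
    pdT (gowdyEnergyFlux U A) R θ =
      2 * (pdT (pdR U) R θ * pdT U R θ + pdR U R θ * pdT (pdT U) R θ) +
      exp (4 * U R θ) / (2 * R ^ 2) *
        (4 * pdT U R θ * (pdR A R θ * pdT A R θ) +
          pdT (pdR A) R θ * pdT A R θ + pdR A R θ * pdT (pdT A) R θ) := by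
  have dU := hasDerivAt_pdT (hU.differentiableAt two_ne_zero)
  have dU_R := hasDerivAt_pdT (differentiableAt_pdR hU)
  have dU_T := hasDerivAt_pdT (differentiableAt_pdT hU)
  have dA_R := hasDerivAt_pdT (differentiableAt_pdR hA)
  have dA_T := hasDerivAt_pdT (differentiableAt_pdT hA)
  refine (((dU_R.mul dU_T).const_mul 2).add
    (((dU.const_mul 4).exp.div_const (2 * R ^ 2)).mul (dA_R.mul dA_T))).deriv.trans ?_
  simp only [Pi.mul_apply]
  ring

namespace IsGowdySolutionAt

theorem pdR_pdR_U (h : IsGowdySolutionAt U A R θ) (hR : R ≠ 0) :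
    pdR (pdR U) R θ = pdT (pdT U) R θ - pdR U R θ / R +
      exp (4 * U R θ) / (2 * R ^ 2) * ((pdR A R θ) ^ 2 - (pdT A R θ) ^ 2) := by
  have time : deriv (fun r ↦ r * pdR U r θ) R = 1 * pdR U R θ + R * pdR (pdR U) R θ :=
    ((hasDerivAt_id R).mul (hasDerivAt_pdR (differentiableAt_pdR h.contDiffAt_U))).deriv
  have space : deriv (fun t ↦ R * pdT U R t) θ = R * pdT (pdT U) R θ := deriv_const_mul_field R
  have wave := h.wave_U
  rw [time, space] at wave
  field_simp at wave ⊢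
  linear_combination wave

theorem pdR_pdR_A (h : IsGowdySolutionAt U A R θ) (hR : R ≠ 0) :
    pdR (pdR A) R θ = pdT (pdT A) R θ + pdR A R θ / R +
      4 * (-(pdR U R θ * pdR A R θ) + pdT U R θ * pdT A R θ) := by
  have time : deriv (fun r ↦ r⁻¹ * pdR A r θ) R =
      -(R ^ 2)⁻¹ * pdR A R θ + R⁻¹ * pdR (pdR A) R θ :=
    ((hasDerivAt_inv hR).mul (hasDerivAt_pdR (differentiableAt_pdR h.contDiffAt_A))).deriv
  have space : deriv (fun t ↦ R⁻¹ * pdT A R t) θ = R⁻¹ * pdT (pdT A) R θ :=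
    deriv_const_mul_field R⁻¹
  have wave := h.wave_A
  rw [time, space] at wave
  field_simp at wave ⊢
  linear_combination wave

theorem energy_balance (h : IsGowdySolutionAt U A R θ) (hR : R ≠ 0) :
    pdR (gowdyEnergyDensity U A) R θ =
      pdT (gowdyEnergyFlux U A) R θ + -(2 / R) * gowdyDissipation U A R θ := by
  rw [pdR_gowdyEnergyDensity h.contDiffAt_U h.contDiffAt_A hR,
    pdT_gowdyEnergyFlux h.contDiffAt_U h.contDiffAt_A, h.pdR_pdR_U hR, h.pdR_pdR_A hR,
    gowdyDissipation]
  field_simp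
  ring

end IsGowdySolutionAt

theorem gowdyDissipation_nonneg : 0 ≤ gowdyDissipation U A R θ := by
  unfold gowdyDissipation
  positivity

theorem hasDerivAt_gowdyEnergy (hsol : ∀ θ ∈ uIcc 0 T, IsGowdySolutionAt U A R θ) (hR : R ≠ 0)
    (hU : ∀ r, Function.Periodic (U r) T) (hA : ∀ r, Function.Periodic (A r) T) :
    HasDerivAt (gowdyEnergy U A T) (-(2 / R) * ∫ θ in 0..T, gowdyDissipation U A R θ) R := by
  rw [← intervalIntegral.integral_const_mul]
  exact hasDerivAt_intervalIntegral_of_balanceLaw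
    (fun θ hθ ↦ contDiffAt_gowdyEnergyDensity (hsol θ hθ).contDiffAt_U (hsol θ hθ).contDiffAt_A
      one_add_one_eq_two.le hR)
    (fun θ hθ ↦ contDiffAt_gowdyEnergyFlux (hsol θ hθ).contDiffAt_U (hsol θ hθ).contDiffAt_A
      one_add_one_eq_two.le hR)
    (periodic_gowdyEnergyFlux hU hA R).eq
    fun θ hθ ↦ (hsol θ hθ).energy_balance hR

theorem stmt0_general {s : Set ℝ} (hs : Convex ℝ s) (hs_pos : s ⊆ Ioi 0) (hT : 0 ≤ T)
    (hsol : ∀ R ∈ s, ∀ θ ∈ Icc 0 T, IsGowdySolutionAt U A R θ)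
    (hU : ∀ R, Function.Periodic (U R) T) (hA : ∀ R, Function.Periodic (A R) T) :
    (∀ R ∈ s, HasDerivAt (gowdyEnergy U A T)
      (-(2 / R) * ∫ θ in 0..T, gowdyDissipation U A R θ) R) ∧
    AntitoneOn (gowdyEnergy U A T) s := by
  have energy_identity : ∀ R ∈ s, HasDerivAt (gowdyEnergy U A T)
      (-(2 / R) * ∫ θ in 0..T, gowdyDissipation U A R θ) R := fun R hR ↦
    hasDerivAt_gowdyEnergy (by simpa only [uIcc_of_le hT] using hsol R hR)
      (hs_pos hR).ne' hU hA
  refine ⟨energy_identity, antitoneOn_of_hasDerivWithinAt_nonpos hs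
    (fun R hR ↦ (energy_identity R hR).continuousAt.continuousWithinAt)
    (fun R hR ↦ (energy_identity R (interior_subset hR)).hasDerivWithinAt) fun R hR ↦ ?_⟩
  have hR_pos : 0 < R := hs_pos (interior_subset hR)
  exact mul_nonpos_of_nonpos_of_nonneg (neg_nonpos.mpr (by positivity))
    (intervalIntegral.integral_nonneg hT fun _ _ ↦ gowdyDissipation_nonneg)

end Gowdy

theorem stmt0
    (R₀ : ℝ) (hR₀ : 0 < R₀)
    (U A : ℝ → ℝ → ℝ)
    (hU : ContDiff ℝ (⊤ : ℕ∞) (Function.uncurry U))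
    (hA : ContDiff ℝ (⊤ : ℕ∞) (Function.uncurry A))
    (hUper : ∀ R θ, U R (θ + 2 * π) = U R θ)
    (hAper : ∀ R θ, A R (θ + 2 * π) = A R θ)
    (eqU : ∀ R, R₀ ≤ R → ∀ θ : ℝ,
      deriv (fun r => r * pdR U r θ) R - deriv (fun t => R * pdT U R t) θ
        = exp (4 * U R θ) / (2 * R) * ((pdR A R θ) ^ 2 - (pdT A R θ) ^ 2))
    (eqA : ∀ R, R₀ ≤ R → ∀ θ : ℝ,
      deriv (fun r => r⁻¹ * pdR A r θ) R - deriv (fun t => R⁻¹ * pdT A R t) θ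
        = 4 / R * (-(pdR U R θ * pdR A R θ) + pdT U R θ * pdT A R θ))
    (E : ℝ → ℝ)
    (hE : ∀ R, E R = ∫ θ in (0:ℝ)..(2 * π),
      (pdR U R θ) ^ 2 + (pdT U R θ) ^ 2
        + exp (4 * U R θ) / (4 * R ^ 2) * ((pdR A R θ) ^ 2 + (pdT A R θ) ^ 2)) :
    (∀ R, R₀ ≤ R → HasDerivWithinAt E
        (-(2 / R) * ∫ θ in (0:ℝ)..(2 * π),
          (pdR U R θ) ^ 2 + exp (4 * U R θ) / (4 * R ^ 2) * (pdT A R θ) ^ 2)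
        (Set.Ici R₀) R)
      ∧ AntitoneOn E (Set.Ici R₀) := by
  obtain rfl : E = gowdyEnergy U A (2 * π) := funext hE
  obtain ⟨energy_identity, antitone⟩ := stmt0_general (convex_Ici R₀) (Ici_subset_Ioi.mpr hR₀)
    two_pi_pos.le (fun R hR θ _ ↦ ⟨(contDiff_infty.mp hU 2).contDiffAt,
      (contDiff_infty.mp hA 2).contDiffAt, eqU R hR θ, eqA R hR θ⟩) hUper hAper
  exact ⟨fun R hR ↦ (energy_identity R hR).hasDerivWithinAt, antitone⟩
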